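/- Let i denote the imaginary unit. Then (1/2) · ∫_{-∞}^{∞} (ξ² − 4iξ − 3) / ((ξ − i)⁴ (1 + ξ²)²) dξ = −(9/32)π. -/

import Mathlib

open Complex MeasureTheory

lemma aux_u (x : ℝ) : (x : ℂ) - I ≠ 0 := by
  intro h
  have := congrArg Complex.im h
  simp at this

lemma aux_v (x : ℝ) : (x : ℂ) + I ≠ 0 := by
  intro h
  have := congrArg Complex.im h
  simp at this

lemma aux_q (x : ℝ) : 1 + (x : ℂ) ^ 2 = ((x : ℂ) - I) * ((x : ℂ) + I) := by
  linear_combination I_sq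

lemma aux_int : Integrable (fun ξ : ℝ => ((ξ : ℂ) ^ 2 - 4 * I * (ξ : ℂ) - 3) /
          (((ξ : ℂ) - I) ^ 4 * (1 + (ξ : ℂ) ^ 2) ^ 2)) := by
  refine Integrable.mono' (integrable_inv_one_add_sq.const_mul 3) ?_ ?_
  · refine (Continuous.div (by fun_prop) (by fun_prop) ?_).aestronglyMeasurable
    intro x
    rw [aux_q]
    have := aux_u x
    have := aux_v x
    positivity
  · refine Filter.Eventually.of_forall fun x => ?_
    have h1 : (x : ℂ) ^ 2 - 4 * I * (x : ℂ) - 3 = (x - I) * ((x - I) - 2 * I) := by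
      linear_combination (-3) * I_sq
    have h2 : ‖((x : ℂ) - I) - 2 * I‖ ≤ ‖(x : ℂ) - I‖ + 2 := by
      refine (norm_sub_le _ _).trans ?_
      simp
    have h3 : 1 ≤ ‖(x : ℂ) - I‖ := by
      have := Complex.abs_im_le_norm ((x : ℂ) - I)
      simpa using this
    have h4 : ‖1 + (x : ℂ) ^ 2‖ = 1 + x ^ 2 := by
      have : 1 + (x : ℂ) ^ 2 = ((1 + x ^ 2 : ℝ) : ℂ) := by push_cast; rfl
      rw [this, Complex.norm_real, Real.norm_of_nonneg (by positivity)]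
    rw [norm_div, norm_mul, norm_pow, norm_pow, h4, h1, norm_mul]
    generalize ‖(x : ℂ) - I - 2 * I‖ = w at *
    generalize ‖(x : ℂ) - I‖ = u at *
    have hq : 1 ≤ 1 + x ^ 2 := by nlinarith [sq_nonneg x]
    generalize 1 + x ^ 2 = q at *
    have hu : 0 < u := by linarith
    have hq0 : 0 < q := by linarith
    rw [← div_eq_mul_inv, div_le_div_iff₀ (by positivity) hq0]
    have a1 : u * w ≤ 3 * u ^ 2 := by nlinarith
    have a2 : u ^ 2 ≤ u ^ 4 := pow_le_pow_right₀ h3 (by norm_num)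
    have a3 : q ≤ q ^ 2 := by nlinarith
    calc u * w * q ≤ (3 * u ^ 4) * q ^ 2 := by
          apply mul_le_mul (by linarith) a3 hq0.le (by positivity)
      _ = _ := by ring

noncomputable def auxG (x : ℝ) : ℂ :=
  -(9 / 16) * (Real.arctan x : ℂ) + (-(I / 8) * ((x - I : ℂ)⁻¹) ^ 4 + (1 / 4) * ((x - I : ℂ)⁻¹) ^ 3
    + (5 * I / 16) * ((x - I : ℂ)⁻¹) ^ 2 - (7 / 16) * ((x - I : ℂ)⁻¹) - (1 / 8) * (x + I : ℂ)⁻¹)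

lemma aux_deriv (x : ℝ) : HasDerivAt auxG (((x : ℂ) ^ 2 - 4 * I * (x : ℂ) - 3) /
          (((x : ℂ) - I) ^ 4 * (1 + (x : ℂ) ^ 2) ^ 2)) x := by
  have hx : HasDerivAt (fun y : ℝ => (y : ℂ)) 1 x := Complex.ofRealCLM.hasDerivAt
  have hu := (hx.sub_const I).fun_inv (aux_u x)
  have hv := (hx.add_const I).fun_inv (aux_v x)
  have ha := (Real.hasDerivAt_arctan x).ofReal_comp
  have := (ha.const_mul (-(9 / 16) : ℂ)).fun_add
    ((((((hu.fun_pow 4).const_mul (-(I / 8))).fun_add ((hu.fun_pow 3).const_mul (1 / 4))).fun_add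
      ((hu.fun_pow 2).const_mul (5 * I / 16))).fun_sub (hu.const_mul (7 / 16))).fun_sub
        (hv.const_mul (1 / 8)))
  refine this.congr_deriv ?_
  push_cast
  rw [aux_q]
  have h1 := aux_u x
  have h2 := aux_v x
  have h3 : (x : ℂ) + I = (x - I) + 2 * I := by ring
  have h4 : (x : ℂ) ^ 2 - 4 * I * (x : ℂ) - 3 = (x - I) * ((x - I) - 2 * I) := by
    linear_combination (-3) * I_sq
  rw [h4]
  rw [h3] at h2 ⊢
  generalize (x : ℂ) - I = u at *
  have hI := I_sq
  generalize I = j at *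
  field_simp
  grind

lemma aux_inv (c : ℂ) (l : Filter ℝ) (hl : l ≤ Filter.cocompact ℝ) :
    Filter.Tendsto (fun x : ℝ => ((x : ℂ) + c)⁻¹) l (nhds 0) := by
  refine Filter.tendsto_inv₀_cobounded.comp ?_
  rw [← tendsto_norm_atTop_iff_cobounded]
  have h := (tendsto_norm_cocompact_atTop (E := ℝ)).mono_left hl
  refine Filter.tendsto_atTop_mono ?_ (Filter.tendsto_atTop_add_const_right l (-‖c‖) h)
  intro x
  have := norm_sub_le ((x : ℂ) + c) c
  rw [add_sub_cancel_right, Complex.norm_real] at this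
  linarith

lemma aux_lim (l : Filter ℝ) (hl : l ≤ Filter.cocompact ℝ) (a : ℝ)
    (ha : Filter.Tendsto Real.arctan l (nhds a)) :
    Filter.Tendsto auxG l (nhds (-(9 / 16) * (a : ℂ))) := by
  have hu : Filter.Tendsto (fun x : ℝ => ((x : ℂ) - I)⁻¹) l (nhds 0) := by
    simpa [sub_eq_add_neg] using aux_inv (-I) l hl
  have hv := aux_inv I l hl
  have ha' := (Complex.continuous_ofReal.tendsto a).comp ha
  have := (ha'.const_mul (-(9 / 16) : ℂ)).add
    ((((((hu.pow 4).const_mul (-(I / 8))).add ((hu.pow 3).const_mul (1 / 4))).add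
      ((hu.pow 2).const_mul (5 * I / 16))).sub (hu.const_mul (7 / 16))).sub
        (hv.const_mul (1 / 8)))
  have e : -(9 / 16) * (a : ℂ) = -(9 / 16) * ↑a + (-(I / 8) * 0 ^ 4 + 1 / 4 * 0 ^ 3
      + 5 * I / 16 * 0 ^ 2 - 7 / 16 * 0 - 1 / 8 * 0) := by ring
  rw [e]
  exact this

theorem stmt_12 :
    (1 / 2 : ℂ) * ∫ ξ : ℝ,
        ((ξ : ℂ) ^ 2 - 4 * I * (ξ : ℂ) - 3) /
          (((ξ : ℂ) - I) ^ 4 * (1 + (ξ : ℂ) ^ 2) ^ 2)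
      = -(9 / 32) * (Real.pi : ℂ) := by
  rw [integral_of_hasDerivAt_of_tendsto aux_deriv aux_int
    (aux_lim Filter.atBot atBot_le_cocompact _ (Real.tendsto_arctan_atBot.mono_right nhdsWithin_le_nhds))
    (aux_lim Filter.atTop atTop_le_cocompact _ (Real.tendsto_arctan_atTop.mono_right nhdsWithin_le_nhds))]
  push_cast
  ring
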